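/- arXiv:2012.14723 — 2 statements merged into one kernel-verified Lean document; each statement's English description precedes it below -/
import Mathlib

section
/- Let T : ℂ((ν)) → ℂ((ν)) be the ℂ-linear operator Tg := ν^{−1}·(dg/dν). A formal Laurent series g ∈ ℂ((ν)) belongs to the ℂ-linear span of the set { T^j f : j ≥ 0, f ∈ ℂ[[ν]] } if and only if the coefficient of ν^{−n} in g vanishes for every even integer n ≥ 2, i.e., if and only if the principal part of g is an odd series in ν. -/
/-- The termwise formal derivative `d/dν` on `ℂ((ν))`: the coefficient of `ν^n` in `dg/dν`
is `(n+1)·g_{n+1}`. -/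
noncomputable def lderiv (g : LaurentSeries ℂ) : LaurentSeries ℂ where
  coeff n := (n + 1 : ℤ) • g.coeff (n + 1)
  isPWO_support' := by
    have hsub : Function.support (fun n : ℤ => (n + 1 : ℤ) • g.coeff (n + 1)) ⊆
        (fun m : ℤ => m - 1) '' Function.support g.coeff := by
      intro n hn
      refine ⟨n + 1, ?_, by ring⟩
      intro h
      apply hn
      simp [Function.mem_support, h]
    exact ((g.isPWO_support).image_of_monotone
      (fun a b hab => by simpa using sub_le_sub_right hab 1)).mono hsub

/-- Multiplication by `ν⁻¹` composed with `d/dν`, i.e. `T g = ν⁻¹·(dg/dν)`. -/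
noncomputable def Tnu (g : LaurentSeries ℂ) : LaurentSeries ℂ :=
  HahnSeries.single (-1 : ℤ) (1 : ℂ) * lderiv g

theorem Tnu_coeff (g : LaurentSeries ℂ) (n : ℤ) :
    (Tnu g).coeff n = ((n + 2 : ℤ) : ℂ) * g.coeff (n + 2) := by
  unfold Tnu
  rw [HahnSeries.coeff_single_mul, one_mul]
  change (n - -1 + 1 : ℤ) • g.coeff (n - -1 + 1) = _
  have : n - -1 + 1 = n + 2 := by ring
  rw [this, zsmul_eq_mul]

theorem Tnu_single (n : ℤ) (a : ℂ) :
    Tnu (HahnSeries.single n a) = HahnSeries.single (n - 2) ((n : ℂ) * a) := by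
  ext m
  rw [Tnu_coeff]
  by_cases h : m = n - 2
  · subst h
    simp
  · rw [HahnSeries.coeff_single_of_ne h, HahnSeries.coeff_single_of_ne (by omega), mul_zero]

theorem single_eq_iterate (k : ℕ) : ∀ c : ℂ, ∃ c' : ℂ,
    (HahnSeries.single (1 - 2 * (k : ℤ)) c : LaurentSeries ℂ)
      = Tnu^[k] (HahnSeries.single (1 : ℤ) c') := by
  induction k with
  | zero => intro c; exact ⟨c, by simp⟩
  | succ k ih =>
    intro c
    obtain ⟨c', h⟩ := ih (c / ((1 - 2 * (k : ℤ) : ℤ) : ℂ))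
    refine ⟨c', ?_⟩
    rw [Function.iterate_succ_apply', ← h, Tnu_single]
    have hne : ((1 - 2 * (k : ℤ) : ℤ) : ℂ) ≠ 0 := by
      rw [Int.cast_ne_zero]; omega
    rw [mul_div_cancel₀ _ hne]
    congr 1
    push_cast
    ring

theorem single_one_eq (c : ℂ) : (HahnSeries.single (1 : ℤ) c : LaurentSeries ℂ)
    = HahnSeries.ofPowerSeries ℤ ℂ (PowerSeries.C c * PowerSeries.X) := by
  rw [map_mul, HahnSeries.ofPowerSeries_C, HahnSeries.ofPowerSeries_X]
  simp [HahnSeries.C_apply, HahnSeries.single_mul_single]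

theorem mem_of_bound (N : ℕ) : ∀ g : LaurentSeries ℂ,
    (∀ m : ℤ, m < -(N : ℤ) → g.coeff m = 0) →
    (∀ n : ℤ, 2 ≤ n → Even n → g.coeff (-n) = 0) →
    g ∈ Submodule.span ℂ
        { h : LaurentSeries ℂ |
          ∃ (j : ℕ) (f : PowerSeries ℂ), h = Tnu^[j] (HahnSeries.ofPowerSeries ℤ ℂ f) } := by
  induction N with
  | zero =>
    intro g hg _
    apply Submodule.subset_span
    refine ⟨0, PowerSeries.mk (fun n => g.coeff n), ?_⟩
    ext m
    rw [Function.iterate_zero_apply, PowerSeries.coeff_coe]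
    split_ifs with h
    · exact hg m (by simpa using h)
    · rw [PowerSeries.coeff_mk]
      congr 1
      omega
  | succ N ih =>
    intro g hg hp
    rcases Nat.even_or_odd (N + 1) with he | ho
    · apply ih g _ hp
      intro m hm
      by_cases h : m = -((N + 1 : ℕ) : ℤ)
      · rw [h]
        refine hp _ ?_ (by exact_mod_cast he)
        obtain ⟨r, hr⟩ := he
        omega
      · exact hg m (by push_cast at h ⊢; omega)
    · obtain ⟨k, hk⟩ := ho
      have hN : (1 - 2 * ((k + 1 : ℕ) : ℤ)) = -((N + 1 : ℕ) : ℤ) := by push_cast; omega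
      obtain ⟨c', hc⟩ := single_eq_iterate (k + 1) (g.coeff (-((N + 1 : ℕ) : ℤ)))
      rw [hN] at hc
      rw [← sub_add_cancel g (HahnSeries.single (-((N + 1 : ℕ) : ℤ))
        (g.coeff (-((N + 1 : ℕ) : ℤ))))]
      apply Submodule.add_mem
      · apply ih
        · intro m hm
          rw [HahnSeries.coeff_sub]
          by_cases h : m = -((N + 1 : ℕ) : ℤ)
          · rw [h, HahnSeries.coeff_single_same, sub_self]
          · rw [HahnSeries.coeff_single_of_ne h, hg m (by push_cast at h ⊢; omega), sub_zero]
        · intro n hn hev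
          rw [HahnSeries.coeff_sub, hp n hn hev, HahnSeries.coeff_single_of_ne, sub_zero]
          obtain ⟨r, hr⟩ := hev
          omega
      · apply Submodule.subset_span
        exact ⟨k + 1, _, by rw [hc, single_one_eq]⟩

theorem iterate_even (f : PowerSeries ℂ) (j : ℕ) : ∀ n : ℤ, 2 ≤ n → Even n →
    (Tnu^[j] (HahnSeries.ofPowerSeries ℤ ℂ f)).coeff (-n) = 0 := by
  induction j with
  | zero =>
    intro n hn _
    rw [Function.iterate_zero_apply, PowerSeries.coeff_coe, if_pos (by omega)]
  | succ j ih =>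
    intro n hn he
    rw [Function.iterate_succ_apply', Tnu_coeff]
    by_cases h : n = 2
    · subst h; simp
    · obtain ⟨r, hr⟩ := he
      have : -n + 2 = -(n - 2) := by ring
      rw [this, ih (n - 2) (by omega) ⟨r - 1, by omega⟩, mul_zero]

/-- A Laurent series `g ∈ ℂ((ν))` lies in the `ℂ`-linear span of
`{ T^j f : j ≥ 0, f ∈ ℂ[[ν]] }` (where `T g = ν^{−1}·dg/dν`) if and only if the coefficient
of `ν^{−n}` in `g` vanishes for every even integer `n ≥ 2`, i.e. iff the principal part of
`g` is odd. -/
theorem stmt_11 (g : LaurentSeries ℂ) :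
    g ∈ Submodule.span ℂ
        { h : LaurentSeries ℂ |
          ∃ (j : ℕ) (f : PowerSeries ℂ), h = Tnu^[j] (HahnSeries.ofPowerSeries ℤ ℂ f) } ↔
      ∀ n : ℤ, 2 ≤ n → Even n → g.coeff (-n) = 0 := by
  constructor
  · intro h
    induction h using Submodule.span_induction with
    | mem x hx =>
      obtain ⟨j, f, rfl⟩ := hx
      exact iterate_even f j
    | zero => intros; simp
    | add x y _ _ hx hy =>
      intro n hn he
      rw [HahnSeries.coeff_add, hx n hn he, hy n hn he, add_zero]
    | smul a x _ hx =>
      intro n hn he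
      rw [HahnSeries.coeff_smul, hx n hn he, smul_zero]
  · intro h
    refine mem_of_bound (-g.order).toNat g ?_ h
    intro m hm
    exact HahnSeries.coeff_eq_zero_of_lt_order (by omega)
end

section
/- Let B ∈ ℂ and let V ∈ ℂ(z) be a rational function that is regular at B with V(B) = 0 and V′(B) = −1 (i.e., V = −(z−B) + O((z−B)²) at B). Define the ℂ-linear operator 𝒟 : ℂ(z) → ℂ(z) by 𝒟f := V·f′. Then for every integer l ≥ 2 the rational function obtained by applying the composition (𝒟 − 1)∘(𝒟 − 2)∘⋯∘(𝒟 − (l−1)) — with (𝒟 − (l−1)) applied first — to (z−B)^{−(l−1)} is regular at z = B. -/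
/-- Derivative of a rational function, via the quotient rule on the reduced
numerator/denominator representation. -/
noncomputable def rderiv (f : RatFunc ℂ) : RatFunc ℂ :=
  algebraMap (Polynomial ℂ) (RatFunc ℂ)
      (Polynomial.derivative f.num * f.denom - f.num * Polynomial.derivative f.denom) /
    algebraMap (Polynomial ℂ) (RatFunc ℂ) f.denom ^ 2

/-- Successive application of the operators `(𝒟 − (l−1)), (𝒟 − (l−2)), …` to `base`,
where `𝒟 f = V·f′`:  `chainD V l base j` is the result of the first `j` applications,
so `chainD V l base (l−1)` is `((𝒟−1)∘(𝒟−2)∘⋯∘(𝒟−(l−1))) base` (rightmost first). -/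
noncomputable def chainD (V : RatFunc ℂ) (l : ℕ) (base : RatFunc ℂ) : ℕ → RatFunc ℂ
  | 0 => base
  | j + 1 => V * rderiv (chainD V l base j) - ((l - 1 - j : ℕ) : RatFunc ℂ) * chainD V l base j

open Polynomial in
theorem aux_cross (a b : ℂ[X]) (hb : b ≠ 0) (f : RatFunc ℂ)
    (hf : f = algebraMap ℂ[X] (RatFunc ℂ) a / algebraMap ℂ[X] (RatFunc ℂ) b) :
    f.num * b = a * f.denom := by
  have hbp : algebraMap ℂ[X] (RatFunc ℂ) b ≠ 0 := RatFunc.algebraMap_ne_zero hb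
  have hdp : algebraMap ℂ[X] (RatFunc ℂ) f.denom ≠ 0 :=
    RatFunc.algebraMap_ne_zero f.denom_ne_zero
  have h := RatFunc.num_div_denom f
  have h2 : algebraMap ℂ[X] (RatFunc ℂ) f.num / algebraMap ℂ[X] (RatFunc ℂ) f.denom
      = algebraMap ℂ[X] (RatFunc ℂ) a / algebraMap ℂ[X] (RatFunc ℂ) b := h.trans hf
  rw [div_eq_div_iff hdp hbp] at h2
  apply RatFunc.algebraMap_injective ℂ
  simpa using h2

theorem aux_ring {R : Type*} [CommRing R] (n d a b np dp ap bp : R) (h : n * b = a * d)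
    (h2 : np * b + n * bp = ap * d + a * dp) :
    (np * d - n * dp) * b ^ 2 = (ap * b - a * bp) * d ^ 2 := by
  linear_combination (d * b) * h2 - (bp * d + dp * b) * h

open Polynomial in
theorem aux_rderiv (a b : ℂ[X]) (hb : b ≠ 0) (f : RatFunc ℂ)
    (hf : f = algebraMap ℂ[X] (RatFunc ℂ) a / algebraMap ℂ[X] (RatFunc ℂ) b) :
    rderiv f = algebraMap ℂ[X] (RatFunc ℂ) (derivative a * b - a * derivative b) /
      algebraMap ℂ[X] (RatFunc ℂ) b ^ 2 := by
  have hbp : algebraMap ℂ[X] (RatFunc ℂ) b ≠ 0 := RatFunc.algebraMap_ne_zero hb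
  have hdp : algebraMap ℂ[X] (RatFunc ℂ) f.denom ≠ 0 :=
    RatFunc.algebraMap_ne_zero f.denom_ne_zero
  have h := aux_cross a b hb f hf
  have h2 := congrArg derivative h
  simp only [derivative_mul] at h2
  unfold rderiv
  rw [div_eq_div_iff (pow_ne_zero _ hdp) (pow_ne_zero _ hbp)]
  simp only [← map_pow, ← map_mul]
  refine congrArg (algebraMap ℂ[X] (RatFunc ℂ)) ?_
  exact aux_ring _ _ _ _ _ _ _ _ h h2

open Polynomial in
theorem aux_V (B : ℂ) (V : RatFunc ℂ)
    (hreg : Polynomial.eval B V.denom ≠ 0)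
    (hval : RatFunc.eval (RingHom.id ℂ) B V = 0)
    (hder : RatFunc.eval (RingHom.id ℂ) B (rderiv V) = -1) :
    ∃ m e : ℂ[X], V.num = (X - C B) * m ∧ m + V.denom = (X - C B) * e := by
  have h0 : V.num.eval B = 0 := by
    simp only [RatFunc.eval, eval₂_id, div_eq_zero_iff] at hval
    exact hval.resolve_right hreg
  obtain ⟨m, hm⟩ := dvd_iff_isRoot.mpr (show IsRoot V.num B from h0)
  refine ⟨m, ?_⟩
  have hc := aux_cross (derivative V.num * V.denom - V.num * derivative V.denom) (V.denom ^ 2)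
    (pow_ne_zero _ V.denom_ne_zero) (rderiv V) (by rw [map_pow]; rfl)
  have hc2 := congrArg (eval B) hc
  have hw : (rderiv V).denom.eval B ≠ 0 := by
    intro h
    simp [RatFunc.eval, eval₂_id, h] at hder
  have hn : (rderiv V).num.eval B = - (rderiv V).denom.eval B := by
    simp only [RatFunc.eval, eval₂_id] at hder
    rw [div_eq_iff hw] at hder
    rw [hder]; ring
  have hdn : (derivative V.num).eval B = m.eval B := by
    rw [hm]; simp
  simp only [eval_mul, eval_sub, eval_pow, hn, h0, hdn] at hc2
  have hme : m.eval B + V.denom.eval B = 0 := by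
    have : (rderiv V).denom.eval B * V.denom.eval B * (m.eval B + V.denom.eval B) = 0 := by
      linear_combination -hc2
    simpa [hw, hreg] using this
  obtain ⟨e, he⟩ := dvd_iff_isRoot.mpr (show IsRoot (m + V.denom) B by simpa [IsRoot] using hme)
  exact ⟨e, hm, he⟩

open Polynomial in
theorem aux_step (B : ℂ) (V f : RatFunc ℂ) (m e a q : ℂ[X]) (k : ℕ)
    (hm : V.num = (X - C B) * m) (he : m + V.denom = (X - C B) * e) (hq : q ≠ 0)
    (hf : f = algebraMap ℂ[X] (RatFunc ℂ) a /
      algebraMap ℂ[X] (RatFunc ℂ) ((X - C B) ^ (k + 1) * q)) :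
    V * rderiv f - ((k + 1 : ℕ) : RatFunc ℂ) * f =
      algebraMap ℂ[X] (RatFunc ℂ)
        (m * (derivative a * q - a * derivative q) - ((k + 1 : ℕ) : ℂ[X]) * a * q * e) /
      algebraMap ℂ[X] (RatFunc ℂ) ((X - C B) ^ k * (V.denom * q ^ 2)) := by
  have ht : (X - C B : ℂ[X]) ≠ 0 := X_sub_C_ne_zero B
  have hr := aux_rderiv a _ (mul_ne_zero (pow_ne_zero (k + 1) ht) hq) f hf
  have hV := (RatFunc.num_div_denom V).symm
  have hd := V.denom_ne_zero
  have hD : derivative ((X - C B) ^ (k + 1) * q)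
      = ((k + 1 : ℕ) : ℂ[X]) * (X - C B) ^ k * q + (X - C B) ^ (k + 1) * derivative q := by
    simp [derivative_mul, derivative_pow]
  rw [hD] at hr
  rw [hr, hf]
  generalize hdd : V.denom = d at *
  rw [hV, hm]
  have hep : d = (X - C B) * e - m := by rw [← he]; ring
  generalize (X - C B : ℂ[X]) = t at *
  have htp : algebraMap ℂ[X] (RatFunc ℂ) t ≠ 0 := RatFunc.algebraMap_ne_zero ht
  have hqp : algebraMap ℂ[X] (RatFunc ℂ) q ≠ 0 := RatFunc.algebraMap_ne_zero hq
  have hdp : algebraMap ℂ[X] (RatFunc ℂ) d ≠ 0 := RatFunc.algebraMap_ne_zero hd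
  have he2 := congrArg (algebraMap ℂ[X] (RatFunc ℂ)) he
  simp only [map_mul, map_sub, map_add, map_pow, map_natCast] at he2 ⊢
  generalize ((k + 1 : ℕ) : RatFunc ℂ) = c
  generalize algebraMap ℂ[X] (RatFunc ℂ) t = t at *
  generalize algebraMap ℂ[X] (RatFunc ℂ) q = q at *
  generalize algebraMap ℂ[X] (RatFunc ℂ) d = d at *
  generalize algebraMap ℂ[X] (RatFunc ℂ) m = m at *
  generalize algebraMap ℂ[X] (RatFunc ℂ) e = e at *
  rw [pow_succ]
  have hk : t ^ k ≠ 0 := pow_ne_zero _ htp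
  generalize t ^ k = T at *
  field_simp
  linear_combination (-(c * algebraMap ℂ[X] (RatFunc ℂ) a * q)) * he2

open Polynomial in
theorem aux_chain (B : ℂ) (V : RatFunc ℂ) (hreg : Polynomial.eval B V.denom ≠ 0) (m e : ℂ[X])
    (hm : V.num = (X - C B) * m) (he : m + V.denom = (X - C B) * e) (l : ℕ) (j : ℕ)
    (hj : j ≤ l - 1) :
    ∃ a q : ℂ[X], q.eval B ≠ 0 ∧
      chainD V l (((RatFunc.X - RatFunc.C B)⁻¹) ^ (l - 1)) j =
      algebraMap ℂ[X] (RatFunc ℂ) a /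
        algebraMap ℂ[X] (RatFunc ℂ) ((X - C B) ^ (l - 1 - j) * q) := by
  induction j with
  | zero => exact ⟨1, 1, by simp, by simp [chainD]⟩
  | succ j ih =>
    obtain ⟨a, q, hq, hf⟩ := ih (by omega)
    obtain ⟨k, hk⟩ : ∃ k, l - 1 - j = k + 1 := ⟨l - 1 - j - 1, by omega⟩
    have hk2 : l - 1 - (j + 1) = k := by omega
    rw [hk] at hf
    have hq0 : q ≠ 0 := by rintro rfl; simp at hq
    refine ⟨m * (derivative a * q - a * derivative q) - ((k + 1 : ℕ) : ℂ[X]) * a * q * e,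
      V.denom * q ^ 2, by simp [hreg, hq], ?_⟩
    · rw [chainD, hk, hk2]
      exact aux_step B V _ m e a q k hm he hq0 hf

/-- If `V ∈ ℂ(z)` is regular at `B` with `V(B) = 0` and `V′(B) = −1`, and `𝒟 f = V·f′`,
then for every `l ≥ 2` the rational function
`((𝒟−1)∘(𝒟−2)∘⋯∘(𝒟−(l−1))) ((z−B)^{−(l−1)})` is regular at `z = B`
(i.e. its reduced denominator does not vanish at `B`). -/
theorem stmt_15 (B : ℂ) (V : RatFunc ℂ)
    (hreg : Polynomial.eval B V.denom ≠ 0)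
    (hval : RatFunc.eval (RingHom.id ℂ) B V = 0)
    (hder : RatFunc.eval (RingHom.id ℂ) B (rderiv V) = -1)
    (l : ℕ) (hl : 2 ≤ l) :
    Polynomial.eval B
      (RatFunc.denom
        (chainD V l (((RatFunc.X - RatFunc.C B)⁻¹) ^ (l - 1)) (l - 1))) ≠ 0 := by
  obtain ⟨m, e, hm, he⟩ := aux_V B V hreg hval hder
  obtain ⟨a, q, hq, hf⟩ := aux_chain B V hreg m e hm he l (l - 1) le_rfl
  have hq0 : q ≠ 0 := by rintro rfl; simp at hq
  rw [Nat.sub_self, pow_zero, one_mul] at hf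
  rw [hf]
  intro h
  exact hq (Polynomial.eval_eq_zero_of_dvd_of_eval_eq_zero (RatFunc.denom_div_dvd a q) h)
end
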